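/- arXiv:2602.16046 — 3 statements merged into one kernel-verified Lean document; each statement's English description precedes it below -/
import Mathlib

section
/- Let U be a free ultrafilter on ℕ with 𝔟(U) = 𝔡 and let X ⊆ [ω]^ω be ≤_U-unbounded. Then there exists a 2U-scale Y ⊆ [ω]^ω such that the product space X × (Y ∪ Fin) is not Menger. -/
open Cardinal

/-- Subsets of `ℕ` are identified with their characteristic functions `ℕ → Bool`;
this way `P(ℕ)` is the Cantor cube `2^ℕ`, carrying the product topology. -/
abbrev CSet : Type := ℕ → Bool

/-- The subset of `ℕ` coded by `a : CSet`. -/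
def supp (a : CSet) : Set ℕ := {n | a n = true}

/-- `a ∈ [ω]^ω`: the coded set is infinite. -/
def InfS (a : CSet) : Prop := (supp a).Infinite

/-- The increasing enumeration of the set coded by `a`. -/
noncomputable def enum (a : CSet) : ℕ → ℕ := Nat.nth (fun n => a n = true)

/-- `a ≤* b`: the set `[a ≤ b]` (computed on increasing enumerations) is cofinite. -/
def LeStarS (a b : CSet) : Prop := {n | ¬ enum a n ≤ enum b n}.Finite

/-- `a ≤_U b`: the set `[a ≤ b]` (computed on increasing enumerations) is in `U`. -/
def LeUS (U : Ultrafilter ℕ) (a b : CSet) : Prop := {n | enum a n ≤ enum b n} ∈ U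

/-- An ultrafilter is free if it extends the cofinite filter. -/
def Free (U : Ultrafilter ℕ) : Prop := (U : Filter ℕ) ≤ Filter.cofinite

/-- A subset of `[ω]^ω` is bounded if some element of `[ω]^ω` `≤*`-dominates it. -/
def BoundedS (A : Set CSet) : Prop := ∃ b : CSet, InfS b ∧ ∀ a ∈ A, LeStarS a b

/-- A subset of `[ω]^ω` is `≤_U`-bounded if some element of `[ω]^ω` `≤_U`-dominates it. -/
def UBoundedS (U : Ultrafilter ℕ) (A : Set CSet) : Prop :=
  ∃ b : CSet, InfS b ∧ ∀ a ∈ A, LeUS U a b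

/-- `D ⊆ [ω]^ω` is dominating if it `≤*`-dominates every element of `[ω]^ω`. -/
def DominatingS (D : Set CSet) : Prop :=
  (∀ d ∈ D, InfS d) ∧ ∀ a : CSet, InfS a → ∃ d ∈ D, LeStarS a d

/-- `𝔡`: the least cardinality of a dominating subset of `[ω]^ω`. -/
noncomputable def frakDS : Cardinal := sInf {c | ∃ D : Set CSet, DominatingS D ∧ c = #D}

/-- `𝔟(U)`: the least cardinality of a `≤_U`-unbounded subset of `[ω]^ω`. -/
noncomputable def frakBUS (U : Ultrafilter ℕ) : Cardinal :=
  sInf {c | ∃ A : Set CSet, (∀ a ∈ A, InfS a) ∧ ¬ UBoundedS U A ∧ c = #A}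

/-- `Y ⊆ [ω]^ω` is a `U`-scale if for every `b ∈ [ω]^ω` the relation `b ≤_U y` holds
for all but fewer than `𝔟(U)` many `y ∈ Y`. -/
def UScaleS (U : Ultrafilter ℕ) (Y : Set CSet) : Prop :=
  (∀ y ∈ Y, InfS y) ∧
    ∀ b : CSet, InfS b → #({y ∈ Y | ¬ LeUS U b y} : Set CSet) < frakBUS U

/-- `Fin`: the family of (codes of) finite subsets of `ℕ`. -/
def FinS : Set CSet := {a | (supp a).Finite}

/-- `2u := {2n : n ∈ u}` on codes. -/
def double (x : CSet) : CSet := fun n => if n % 2 = 0 then x (n / 2) else false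

/-- `a ⊎ b := {2k : k ∈ a} ∪ {2k+1 : k ∈ b}` on codes. -/
def uplus (a b : CSet) : CSet := fun n => if n % 2 = 0 then a (n / 2) else b (n / 2)

/-- Symmetric difference `⊕` on codes. -/
def symmD (a b : CSet) : CSet := fun n => xor (a n) (b n)

/-- `2U`: the ultrafilter generated by `{2u : u ∈ U}`, i.e. the pushforward of `U`
under `n ↦ 2n`. -/
def twoU (U : Ultrafilter ℕ) : Ultrafilter ℕ := U.map (fun n => 2 * n)

/-- A space is Menger if for every sequence of open covers there are finite
subfamilies whose unions form a cover. -/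
def Menger (Z : Type*) [TopologicalSpace Z] : Prop :=
  ∀ 𝒰 : ℕ → Set (Set Z), (∀ n, (∀ u ∈ 𝒰 n, IsOpen u) ∧ ⋃₀ 𝒰 n = Set.univ) →
    ∃ F : ℕ → Set (Set Z), (∀ n, F n ⊆ 𝒰 n ∧ (F n).Finite) ∧ (⋃ n, ⋃₀ F n) = Set.univ

section Enumeration

theorem le_enum_iff {a : CSet} (ha : InfS a) {m n : ℕ} :
    m ≤ enum a n ↔ Nat.count (fun k => a k = true) m ≤ n :=
  (Nat.count_le_iff_le_nth ha).symm

theorem count_enum {a : CSet} (ha : InfS a) (n : ℕ) :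
    Nat.count (fun k => a k = true) (enum a n) = n :=
  Nat.count_nth_of_infinite ha n

/-- Every function is pointwise bounded by the enumeration of some infinite set. -/
theorem exists_infS_le_enum (f : ℕ → ℕ) : ∃ c : CSet, InfS c ∧ ∀ n, f n ≤ enum c n := by
  classical
  set g : ℕ → ℕ := fun n => ∑ i ∈ Finset.range (n + 1), (f i + 1) with hg
  have hmono : StrictMono g := strictMono_nat_of_lt_succ fun n => by
    simp only [hg]
    rw [Finset.sum_range_succ _ (n + 1)]
    omega
  have hfg : ∀ n, f n ≤ g n := fun n => by
    simp only [hg]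
    rw [Finset.sum_range_succ]
    omega
  let c : CSet := fun k => decide (k ∈ Set.range g)
  have hsupp : supp c = Set.range g := by
    ext k
    simp [supp, c]
  have hc : InfS c := by
    rw [InfS, hsupp]
    exact Set.infinite_range_of_injective hmono.injective
  refine ⟨c, hc, fun n => (hfg n).trans ((le_enum_iff hc).2 ?_)⟩
  rw [Nat.count_eq_card_filter_range]
  calc _ ≤ ((Finset.range n).image g).card := by
        refine Finset.card_le_card fun k hk => ?_
        obtain ⟨hk, hkc⟩ := Finset.mem_filter.1 hk
        have : k ∈ supp c := hkc
        rw [hsupp] at this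
        obtain ⟨i, rfl⟩ := this
        exact Finset.mem_image_of_mem g
          (Finset.mem_range.2 (hmono.lt_iff_lt.1 (Finset.mem_range.1 hk)))
    _ ≤ n := Finset.card_image_le.trans_eq (Finset.card_range n)

theorem uplus_even (a b : CSet) (n : ℕ) : uplus a b (2 * n) = a n := by
  simp [uplus]

theorem uplus_odd (a b : CSet) (n : ℕ) : uplus a b (2 * n + 1) = b n := by
  have h : (2 * n + 1) / 2 = n := by omega
  simp [uplus, h]

theorem count_uplus (a b : CSet) (m : ℕ) :
    Nat.count (fun k => uplus a b k = true) (2 * m) =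
      Nat.count (fun k => a k = true) m + Nat.count (fun k => b k = true) m := by
  induction m with
  | zero => simp
  | succ m ih =>
    rw [Nat.mul_succ, Nat.count_succ, Nat.count_succ, ih, Nat.count_succ, Nat.count_succ,
      uplus_even, uplus_odd]
    omega

theorem infS_of_odd {a b : CSet} (hb : InfS b) (h : ∀ n, a (2 * n + 1) = b n) : InfS a := by
  refine Set.Infinite.mono ?_ (hb.image (f := fun n => 2 * n + 1) fun m _ n _ hmn => by
    simpa using hmn)
  rintro _ ⟨n, hn, rfl⟩
  exact (h n).trans hn

theorem infS_uplus {a b : CSet} (hb : InfS b) : InfS (uplus a b) :=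
  infS_of_odd hb (uplus_odd a b)

theorem min_le_enum_uplus {a b : CSet} (ha : InfS a) (hb : InfS b) (n : ℕ) :
    min (enum a n) (enum b n) ≤ enum (uplus a b) (2 * n) := by
  have h : 2 * min (enum a n) (enum b n) ≤ enum (uplus a b) (2 * n) := by
    rw [le_enum_iff (infS_uplus hb), count_uplus]
    have h1 := (le_enum_iff ha).1 (min_le_left (enum a n) (enum b n))
    have h2 := (le_enum_iff hb).1 (min_le_right (enum a n) (enum b n))
    omega
  omega

theorem enum_le_enum_uplus_empty {b : CSet} (hb : InfS b) (n : ℕ) :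
    enum b n ≤ enum (uplus (fun _ => false) b) n := by
  have h : 2 * enum b n ≤ enum (uplus (fun _ => false) b) n := by
    rw [le_enum_iff (infS_uplus hb), count_uplus, count_enum hb]
    simp [Nat.count_eq_card_filter_range]
  omega

end Enumeration

section SymmetricDifference

theorem infS_double {x : CSet} (hx : InfS x) : InfS (double x) := by
  refine Set.Infinite.mono ?_ (hx.image (f := fun n => 2 * n) fun m _ n _ hmn => by
    simpa using hmn)
  rintro _ ⟨n, hn, rfl⟩
  simpa [supp, double] using hn

theorem infS_symmD_of_finite {a b : CSet} (ha : InfS a) (hb : b ∈ FinS) :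
    InfS (symmD a b) := by
  refine (Set.Infinite.sdiff ha hb).mono ?_
  rintro n ⟨hn, hn'⟩
  have h1 : a n = true := hn
  have h2 : b n = false := Bool.eq_false_iff.2 hn'
  simp [supp, symmD, h1, h2]

theorem infS_symmD_double_uplus (x a : CSet) {b : CSet} (hb : InfS b) :
    InfS (symmD (double x) (uplus a b)) :=
  infS_of_odd hb fun n => by simp [symmD, uplus_odd, double]

theorem symmD_double_uplus_self (x b : CSet) :
    symmD (double x) (uplus x b) = uplus (fun _ => false) b := by
  funext n
  by_cases h : n % 2 = 0 <;> simp [symmD, double, uplus, h]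

theorem continuous_symmD_double :
    Continuous fun p : CSet × CSet => symmD (double p.1) p.2 := by
  refine continuous_pi fun n => ?_
  by_cases h : n % 2 = 0
  · simp only [symmD, double, h, if_true]
    have hpair : Continuous fun p : CSet × CSet => (p.1 (n / 2), p.2 n) := by fun_prop
    exact (continuous_of_discreteTopology (f := fun q : Bool × Bool => xor q.1 q.2)).comp hpair
  · simp only [symmD, double, h, if_false, Bool.false_xor]
    exact (continuous_apply n).comp continuous_snd

end SymmetricDifference

section Menger

theorem continuous_count (m : ℕ) :
    Continuous fun a : CSet => Nat.count (fun k => a k = true) m := by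
  induction m with
  | zero => simpa using continuous_const
  | succ m ih =>
    simp only [Nat.count_succ]
    exact ih.add ((continuous_of_discreteTopology
      (f := fun q : Bool => if q = true then 1 else 0)).comp (continuous_apply m))

/-- A continuous image of a Menger space in `[ω]^ω` is not dominating: some function bounds
every enumeration infinitely often. -/
theorem Menger.exists_frequently_enum_le {Z : Type*} [TopologicalSpace Z] (hZ : Menger Z)
    {φ : Z → CSet} (hφ : Continuous φ) (hinf : ∀ z, InfS (φ z)) :
    ∃ f : ℕ → ℕ, ∀ z k, ∃ n ≥ k, enum (φ z) n ≤ f n := by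
  let V : ℕ → ℕ → Set Z := fun n m => {z | enum (φ z) n ≤ m}
  have hopen : ∀ n m, IsOpen (V n m) := fun n m => by
    have : V n m = (fun z => Nat.count (fun k => φ z k = true) (m + 1)) ⁻¹' Set.Ioi n := by
      ext z
      have := le_enum_iff (hinf z) (m := m + 1) (n := n)
      simp only [V, Set.mem_ofPred_eq, Set.mem_preimage, Set.mem_Ioi]
      omega
    rw [this]
    exact (isOpen_discrete _).preimage ((continuous_count (m + 1)).comp hφ)
  have key : ∀ k, ∃ g : ℕ → ℕ, ∀ z, ∃ n, enum (φ z) (n + k) ≤ g n := fun k => by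
    obtain ⟨F, hF, hcov⟩ := hZ (fun n => Set.range (V (n + k))) fun n =>
      ⟨by rintro _ ⟨m, rfl⟩; exact hopen _ _,
        Set.eq_univ_of_forall fun z => ⟨V (n + k) (enum (φ z) (n + k)), ⟨_, rfl⟩, by simp [V]⟩⟩
    have hbound : ∀ n, ∃ M, ∀ u ∈ F n, u ⊆ V (n + k) M := fun n => by
      choose! r hr using (hF n).1
      obtain ⟨M, hM⟩ := ((hF n).2.image r).bddAbove
      refine ⟨M, fun u hu z hz => ?_⟩
      rw [← hr hu] at hz
      exact le_trans hz (hM (Set.mem_image_of_mem r hu))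
    choose g hg using hbound
    refine ⟨g, fun z => ?_⟩
    have hz : z ∈ ⋃ n, ⋃₀ F n := hcov ▸ Set.mem_univ z
    obtain ⟨n, u, hu, hzu⟩ := Set.mem_iUnion.1 hz
    exact ⟨n, hg n u hu hzu⟩
  choose g hg using key
  refine ⟨fun n => (Finset.range (n + 1)).sup fun k => g k (n - k), fun z k => ?_⟩
  obtain ⟨n, hn⟩ := hg k z
  refine ⟨n + k, Nat.le_add_left _ _, hn.trans ?_⟩
  have := Finset.le_sup (f := fun j => g j (n + k - j))
    (Finset.mem_range.2 (by omega : k < n + k + 1))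
  simpa using this

end Menger

section Cardinals

theorem LeStarS.leUS {U : Ultrafilter ℕ} (hU : Free U) {a b : CSet} (h : LeStarS a b) :
    LeUS U a b := by
  refine hU ?_
  rw [Filter.mem_cofinite]
  exact h

theorem LeUS.trans {U : Ultrafilter ℕ} {a b c : CSet} (h : LeUS U a b) (h' : LeUS U b c) :
    LeUS U a c := by
  filter_upwards [h, h'] with n h h' using h.trans h'

theorem leUS_of_not_leUS {U : Ultrafilter ℕ} {a b : CSet} (h : ¬ LeUS U a b) :
    LeUS U b a := by
  filter_upwards [Ultrafilter.compl_mem_iff_notMem.2 h] with n hn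
  exact le_of_not_ge fun hle => hn hle

theorem leUS_twoU {U : Ultrafilter ℕ} {a b : CSet} :
    LeUS (twoU U) a b ↔ {n | enum a (2 * n) ≤ enum b (2 * n)} ∈ U :=
  Iff.rfl

theorem uBoundedS_of_lt {U : Ultrafilter ℕ} {A : Set CSet} (hA : ∀ a ∈ A, InfS a)
    (h : #A < frakBUS U) : UBoundedS U A := by
  by_contra hb
  exact notMem_of_lt_csInf' h ⟨A, hA, hb, rfl⟩

theorem not_uBoundedS_setOf_infS (U : Ultrafilter ℕ) : ¬ UBoundedS U {a | InfS a} := by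
  rintro ⟨b, -, hb⟩
  obtain ⟨c, hc, hbc⟩ := exists_infS_le_enum fun n => enum b n + 1
  obtain ⟨n, hn⟩ := U.neBot.nonempty_of_mem (hb c hc)
  have := hbc n
  have : enum c n ≤ enum b n := hn
  omega

theorem frakBUS_le_frakBUS_twoU (U : Ultrafilter ℕ) : frakBUS U ≤ frakBUS (twoU U) := by
  refine le_csInf ⟨_, _, fun _ h => h, not_uBoundedS_setOf_infS _, rfl⟩ ?_
  rintro _ ⟨A, -, hA, rfl⟩
  by_contra! hlt
  choose e he hle using fun a : CSet => exists_infS_le_enum fun n => enum a (2 * n)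
  obtain ⟨b, hb, hbound⟩ := uBoundedS_of_lt (A := e '' A)
    (by rintro _ ⟨a, -, rfl⟩; exact he a) (mk_image_le.trans_lt hlt)
  obtain ⟨c, hc, hbc⟩ := exists_infS_le_enum fun n => enum b (n / 2)
  refine hA ⟨c, hc, fun a ha => leUS_twoU.2 ?_⟩
  filter_upwards [hbound _ ⟨a, ha, rfl⟩] with n hn
  have h := hbc (2 * n)
  rw [Nat.mul_div_cancel_left n two_pos] at h
  exact (hle a n).trans (hn.trans h)

theorem mk_Iio_ord_lt {c : Cardinal} (i : c.ord.ToType) : #(Set.Iio i) < c :=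
  (mk_Iio_lt i (by simp)).trans_eq (mk_ord_toType c)

theorem exists_dominatingS_mk_eq : ∃ D : Set CSet, DominatingS D ∧ frakDS = #D := by
  refine csInf_mem (s := {c | ∃ D : Set CSet, DominatingS D ∧ c = #D})
    ⟨_, {a | InfS a}, ⟨fun _ h => h, fun a ha => ⟨a, ha, ?_⟩⟩, rfl⟩
  simp [LeStarS]

end Cardinals

/-- If `𝔟(U) = 𝔡`, a `≤_U`-unbounded `X` contains a transfinite sequence `x` that is paired with a
dominating sequence `e` such that each `e i`, `≤_U`-below `x i`, is `≤_U`-above all earlier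
members of a dominating family. -/
theorem exists_scale_sequence {U : Ultrafilter ℕ} (hU : Free U) (hbd : frakBUS U = frakDS)
    {X : Set CSet} (hX : ¬ UBoundedS U X) :
    ∃ x e : (frakBUS U).ord.ToType → CSet,
      (∀ i, x i ∈ X) ∧ (∀ i, InfS (e i)) ∧ (∀ i, LeUS U (e i) (x i)) ∧
      ∀ b, InfS b → ∃ j, LeStarS b (e j) ∧ ∀ i ≥ j, LeUS U b (e i) := by
  obtain ⟨D, hD, hcard⟩ := exists_dominatingS_mk_eq
  obtain ⟨d⟩ : Nonempty ((frakBUS U).ord.ToType ≃ D) :=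
    Cardinal.eq.1 (by rw [mk_ord_toType, hbd, hcard])
  have hstep : ∀ i, ∃ e, InfS e ∧ (∀ n, enum (d i : CSet) n ≤ enum e n) ∧
      ∀ j < i, LeUS U (d j) e := fun i => by
    obtain ⟨b, hb, hbound⟩ := uBoundedS_of_lt (U := U)
      (A := (fun j => (d j : CSet)) '' Set.Iio i)
      (by rintro _ ⟨j, -, rfl⟩; exact hD.1 _ (d j).2)
      (mk_image_le.trans_lt (mk_Iio_ord_lt i))
    obtain ⟨e, he, hle⟩ := exists_infS_le_enum fun n => max (enum (d i : CSet) n) (enum b n)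
    refine ⟨e, he, fun n => (le_max_left _ _).trans (hle n), fun j hj => ?_⟩
    filter_upwards [hbound _ ⟨j, hj, rfl⟩] with n hn
    exact hn.trans ((le_max_right _ _).trans (hle n))
  choose e he hde hlt using hstep
  have hx : ∀ i, ∃ x ∈ X, LeUS U (e i) x := fun i => by
    by_contra! h
    exact hX ⟨e i, he i, fun a ha => leUS_of_not_leUS (h a ha)⟩
  choose x hxX hex using hx
  refine ⟨x, e, hxX, he, hex, fun b hb => ?_⟩
  obtain ⟨a, ha, hba⟩ := hD.2 b hb
  obtain ⟨j, rfl⟩ : ∃ j, (d j : CSet) = a := ⟨d.symm ⟨a, ha⟩, by simp⟩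
  have hbj : LeStarS b (e j) := hba.subset fun n hn h => hn (h.trans (hde j n))
  refine ⟨j, hbj, fun i hij => ?_⟩
  rcases hij.eq_or_lt with rfl | hij
  · exact hbj.leUS hU
  · exact (hba.leUS hU).trans (hlt i j hij)

theorem uScaleS_range_uplus {U : Ultrafilter ℕ} {x e : (frakBUS U).ord.ToType → CSet}
    (hx : ∀ i, InfS (x i)) (he : ∀ i, InfS (e i)) (hex : ∀ i, LeUS U (e i) (x i))
    (hdom : ∀ b, InfS b → ∃ j, ∀ i ≥ j, LeUS U b (e i)) :
    UScaleS (twoU U) (Set.range fun i => uplus (x i) (e i)) := by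
  refine ⟨by rintro _ ⟨i, rfl⟩; exact infS_uplus (he i), fun b _ => ?_⟩
  obtain ⟨c, hc, hbc⟩ := exists_infS_le_enum fun n => enum b (2 * n)
  obtain ⟨j, hj⟩ := hdom c hc
  have hsub : {y ∈ Set.range fun i => uplus (x i) (e i) | ¬ LeUS (twoU U) b y} ⊆
      (fun i => uplus (x i) (e i)) '' Set.Iio j := by
    rintro _ ⟨⟨i, rfl⟩, hi⟩
    refine ⟨i, Set.mem_Iio.2 (lt_of_not_ge fun hij => hi (leUS_twoU.2 ?_)), rfl⟩
    filter_upwards [hj i hij, hex i] with n hce hex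
    exact (hbc n).trans (hce.trans ((le_min hex le_rfl).trans
      (min_le_enum_uplus (hx i) (he i) n)))
  exact ((mk_le_mk_of_subset hsub).trans mk_image_le).trans_lt
    ((mk_Iio_ord_lt j).trans_le (frakBUS_le_frakBUS_twoU U))

/-- if `U` is a free ultrafilter with `𝔟(U) = 𝔡` and `X ⊆ [ω]^ω` is
`≤_U`-unbounded, then there is a `2U`-scale `Y` such that `X × (Y ∪ Fin)` is not
Menger. -/
theorem stmt3 (U : Ultrafilter ℕ) (hU : Free U) (hbd : frakBUS U = frakDS)
    (X : Set CSet) (hXinf : ∀ x ∈ X, InfS x) (hX : ¬ UBoundedS U X) :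
    ∃ Y : Set CSet, UScaleS (twoU U) Y ∧ ¬ Menger (↥X × ↥(Y ∪ FinS)) := by
  obtain ⟨x, e, hxX, he, hex, hdom⟩ := exists_scale_sequence hU hbd hX
  refine ⟨Set.range fun i => uplus (x i) (e i),
    uScaleS_range_uplus (fun i => hXinf _ (hxX i)) he hex
      fun b hb => (hdom b hb).imp fun _ h => h.2, fun hM => ?_⟩
  obtain ⟨f, hf⟩ := hM.exists_frequently_enum_le
    (φ := fun p => symmD (double p.1) p.2)
    (continuous_symmD_double.comp
      (continuous_subtype_val.prodMap continuous_subtype_val)) (by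
      rintro ⟨⟨a, ha⟩, ⟨_, ⟨i, rfl⟩ | hy⟩⟩
      · exact infS_symmD_double_uplus a (x i) (he i)
      · exact infS_symmD_of_finite (infS_double (hXinf a ha)) hy)
  obtain ⟨c, hc, hfc⟩ := exists_infS_le_enum fun n => f n + 1
  obtain ⟨j, hj, -⟩ := hdom c hc
  obtain ⟨N, hN⟩ := hj.bddAbove
  obtain ⟨n, hn, hle⟩ := hf (⟨x j, hxX j⟩, ⟨uplus (x j) (e j), Or.inl ⟨j, rfl⟩⟩) (N + 1)
  simp only [symmD_double_uplus_self] at hle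
  have hcn : enum c n ≤ enum (e j) n := by
    by_contra h
    have : n ≤ N := hN h
    omega
  have := hfc n
  have := enum_le_enum_uplus_empty (he j) n
  omega
end

section
/- Assume 𝔟 = 𝔡. Let X be an infinite Tychonoff space such that for every free ultrafilter U on ℕ and every hereditarily Lindelöf U-Menger infinite Tychonoff space T, the product X × T is U-Menger. Then X × H is Hurewicz for every hereditarily Lindelöf Hurewicz infinite Tychonoff space H (i.e., in the class of hereditarily Lindelöf spaces, each space which is productively U-Menger for all ultrafilters U is productively Hurewicz). -/
open Cardinal

/-- `a ≤* b`: the set `[a ≤ b]` is cofinite. -/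
def LeStar (a b : ℕ → ℕ) : Prop := {n | ¬ a n ≤ b n}.Finite

/-- `a ≤^∞ b`: the set `[a ≤ b]` is infinite. -/
def LeInf (a b : ℕ → ℕ) : Prop := {n | a n ≤ b n}.Infinite

/-- `a ≤_U b`: the set `[a ≤ b]` belongs to the ultrafilter `U`. -/
def LeU (U : Ultrafilter ℕ) (a b : ℕ → ℕ) : Prop := {n | a n ≤ b n} ∈ U

/-- Elements of `[ω]^ω`, identified with their increasing enumerations. -/
abbrev IncSeq : Type := {f : ℕ → ℕ // StrictMono f}

/-- A subset of `[ω]^ω` is bounded if some element of `[ω]^ω` `≤*`-dominates it. -/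
def Bounded (A : Set IncSeq) : Prop := ∃ b : IncSeq, ∀ a ∈ A, LeStar a.1 b.1

/-- A subset of `[ω]^ω` is dominating if it `≤*`-dominates every element of `[ω]^ω`. -/
def Dominating (D : Set IncSeq) : Prop := ∀ a : IncSeq, ∃ d ∈ D, LeStar a.1 d.1

/-- A subset of `[ω]^ω` is `≤_U`-bounded if some element of `[ω]^ω` `≤_U`-dominates it. -/
def UBounded (U : Ultrafilter ℕ) (A : Set IncSeq) : Prop := ∃ b : IncSeq, ∀ a ∈ A, LeU U a.1 b.1

/-- `𝔟`: the least cardinality of an unbounded subset of `[ω]^ω`. -/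
noncomputable def frakB : Cardinal := sInf {c | ∃ A : Set IncSeq, ¬ Bounded A ∧ c = #A}

/-- `𝔡`: the least cardinality of a dominating subset of `[ω]^ω`. -/
noncomputable def frakD : Cardinal := sInf {c | ∃ D : Set IncSeq, Dominating D ∧ c = #D}

/-- `𝔟(U)`: the least cardinality of a `≤_U`-unbounded subset of `[ω]^ω`. -/
noncomputable def frakBU (U : Ultrafilter ℕ) : Cardinal :=
  sInf {c | ∃ A : Set IncSeq, ¬ UBounded U A ∧ c = #A}

/-- A set `A ⊆ [ω]^ω` is `𝔡`-unbounded if `|A| ≥ 𝔡` and every bounded subset of `A`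
has cardinality less than `𝔡`. -/
def DUnbounded (A : Set IncSeq) : Prop :=
  frakD ≤ #A ∧ ∀ B ⊆ A, Bounded B → #B < frakD

/-- A space is Hurewicz if for every sequence of open covers there are finite
subfamilies such that every point belongs to `⋃ F n` for all but finitely many `n`. -/
def Hurewicz (Z : Type*) [TopologicalSpace Z] : Prop :=
  ∀ 𝒰 : ℕ → Set (Set Z), (∀ n, (∀ u ∈ 𝒰 n, IsOpen u) ∧ ⋃₀ 𝒰 n = Set.univ) →
    ∃ F : ℕ → Set (Set Z), (∀ n, F n ⊆ 𝒰 n ∧ (F n).Finite) ∧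
      ∀ z : Z, {n | z ∉ ⋃₀ F n}.Finite

/-- A space is `U`-Menger if for every sequence of open covers there are finite
subfamilies such that `{n | z ∈ ⋃ F n} ∈ U` for every point `z`. -/
def UMenger (U : Ultrafilter ℕ) (Z : Type*) [TopologicalSpace Z] : Prop :=
  ∀ 𝒰 : ℕ → Set (Set Z), (∀ n, (∀ u ∈ 𝒰 n, IsOpen u) ∧ ⋃₀ 𝒰 n = Set.univ) →
    ∃ F : ℕ → Set (Set Z), (∀ n, F n ⊆ 𝒰 n ∧ (F n).Finite) ∧
      ∀ z : Z, {n | z ∈ ⋃₀ F n} ∈ U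

universe u v w

section Cardinality

open Set

/-- In a hereditarily Lindelöf Hausdorff space, the complement of a point is a countable union of
open sets, each of which is separated from the point by an open set. -/
theorem exists_countable_separation {H : Type*} [TopologicalSpace H] [T2Space H] [Nontrivial H]
    [HereditarilyLindelofSpace H] (x : H) :
    ∃ V G : ℕ → Set H, (∀ n, IsOpen (V n) ∧ x ∈ V n ∧ Disjoint (V n) (G n)) ∧
      ∀ y, y ≠ x → ∃ n, y ∈ G n := by
  have hsep : ∀ y : {y // y ≠ x}, ∃ V G : Set H, IsOpen V ∧ IsOpen G ∧ x ∈ V ∧ y.1 ∈ G ∧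
      Disjoint V G := fun y ↦ t2_separation y.2.symm
  choose V G hV hG hxV hyG hVG using hsep
  obtain ⟨y₀, hy₀⟩ := exists_ne x
  have : Nonempty {y // y ≠ x} := ⟨⟨y₀, hy₀⟩⟩
  obtain ⟨e, he⟩ := eq_open_union_nat G hG
  refine ⟨fun n ↦ V (e n), fun n ↦ G (e n), fun n ↦ ⟨hV _, hxV _, hVG _⟩, fun y hy ↦ ?_⟩
  have hmem : y ∈ ⋃ i, G i := mem_iUnion.2 ⟨⟨y, hy⟩, hyG _⟩
  rw [← he] at hmem
  exact mem_iUnion.1 hmem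

/-- A hereditarily Lindelöf Hausdorff space is small in every universe: each point is determined
by a code of length `ω₁` recording its position with respect to canonically chosen points. -/
theorem small_of_hereditarilyLindelof {H : Type w} [TopologicalSpace H] [T2Space H]
    [HereditarilyLindelofSpace H] : Small.{v} H := by
  classical
  rcases subsingleton_or_nontrivial H with _ | _
  · infer_instance
  choose V G hVG hG using fun x : H ↦ exists_countable_separation x
  let ι : Type := (ℵ₁ : Cardinal.{0}).ord.ToType
  have hι : ∀ ξ : ι, (Iic ξ).Countable := fun ξ ↦ by
    have h : #(Iio ξ) < ℵ₁ := by simpa [ι] using Cardinal.mk_Iio_lt ξ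
    have h' : (Iio ξ).Countable := by
      rw [← Cardinal.le_aleph0_iff_set_countable, ← Order.lt_succ_iff, Cardinal.succ_aleph0]
      exact h
    rw [← Iio_insert]
    exact h'.insert ξ
  have hunc : ¬ (univ : Set ι).Countable := fun h ↦ by
    have h1 : #ι ≤ ℵ₀ := by
      rw [← Cardinal.mk_univ]
      exact Cardinal.le_aleph0_iff_set_countable.2 h
    rw [show #ι = ℵ₁ from by simp [ι]] at h1
    exact absurd h1 (not_le.2 Cardinal.aleph0_lt_aleph_one)
  let pick (ξ : ι) (c : ∀ ζ, ζ < ξ → H → Option ℕ) (y : H) : H :=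
    Classical.epsilon fun y' ↦ ∀ ζ hζ, c ζ hζ y' = c ζ hζ y
  let step (ξ : ι) (c : ∀ ζ, ζ < ξ → H → Option ℕ) (y : H) : Option ℕ :=
    if h : y = pick ξ c y then none else some (Nat.find (hG _ y h))
  let c : ι → H → Option ℕ := wellFounded_lt.fix step
  let p (ξ : ι) (y : H) : H := pick ξ (fun ζ _ ↦ c ζ) y
  have hc : ∀ ξ y, c ξ y = if h : y = p ξ y then none else some (Nat.find (hG _ y h)) :=
    fun ξ y ↦ congrFun (wellFounded_lt.fix_eq step ξ) y
  have hp_mem : ∀ ξ y, ∀ ζ < ξ, c ζ (p ξ y) = c ζ y := fun ξ y ↦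
    Classical.epsilon_spec (p := fun y' ↦ ∀ ζ, ζ < ξ → c ζ y' = c ζ y) ⟨y, fun _ _ ↦ rfl⟩
  have hp_congr : ∀ ξ y y', (∀ ζ < ξ, c ζ y = c ζ y') → p ξ y = p ξ y' := fun ξ y y' h ↦ by
    have : (fun z ↦ ∀ ζ, ζ < ξ → c ζ z = c ζ y) = fun z ↦ ∀ ζ, ζ < ξ → c ζ z = c ζ y' := by
      funext z
      exact propext (forall₂_congr fun ζ hζ ↦ by rw [h ζ hζ])
    exact congrArg Classical.epsilon this
  have hnone : ∀ ξ y, c ξ y = none ↔ y = p ξ y := fun ξ y ↦ by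
    rw [hc]
    split_ifs with h
    · exact iff_of_true rfl h
    · exact iff_of_false not_false h
  have hsome : ∀ ξ y n, c ξ y = some n → y ∈ G (p ξ y) n := fun ξ y n h ↦ by
    rw [hc] at h
    split_ifs at h with h'
    rw [← Option.some.inj h]
    exact Nat.find_spec (hG _ y h')
  refine @small_of_injective H (ι → Option ℕ) _ (fun y ξ ↦ c ξ y) fun y y' hyy' ↦ ?_
  by_contra hne
  have hcode : ∀ ξ, c ξ y = c ξ y' := congrFun hyy'
  have hex : ∀ ξ, ∃ n, c ξ y = some n := fun ξ ↦ by
    rw [← Option.ne_none_iff_exists']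
    intro h
    refine hne (((hnone ξ y).1 h).trans ?_)
    rw [hp_congr ξ y y' fun ζ _ ↦ hcode ζ]
    exact ((hnone ξ y').1 ((hcode ξ).symm.trans h)).symm
  choose n hn using hex
  obtain ⟨m, hm⟩ : ∃ m, ¬ {ξ | n ξ = m}.Countable := by
    by_contra! h
    refine hunc ((countable_iUnion h).mono fun ξ _ ↦ mem_iUnion.2 ⟨n ξ, rfl⟩)
  have hlater : ∀ ζ ξ, ζ < ξ → p ξ y ∈ G (p ζ y) (n ζ) := fun ζ ξ h ↦ by
    have h1 : p ζ (p ξ y) = p ζ y := hp_congr _ _ _ fun η hη ↦ hp_mem ξ y η (hη.trans h)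
    rw [← h1]
    exact hsome _ _ _ ((hp_mem ξ y ζ h).trans (hn ζ))
  obtain ⟨r, hr, hcov⟩ := (HereditarilyLindelofSpace.isLindelof
    ((fun ξ ↦ p ξ y) '' {ξ | n ξ = m})).elim_countable_subcover
    (fun ζ : {ξ | n ξ = m} ↦ V (p ζ y) m) (fun ζ ↦ (hVG _ _).1) (by
      rintro _ ⟨ξ, hξ, rfl⟩
      exact mem_iUnion.2 ⟨⟨ξ, hξ⟩, (hVG _ _).2.1⟩)
  refine hm ((hr.biUnion fun ζ _ ↦ hι ζ.1).mono fun ξ hξ ↦ ?_)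
  obtain ⟨ζ, hζr, hζ⟩ := mem_iUnion₂.1 (hcov (mem_image_of_mem _ hξ))
  refine mem_iUnion₂.2 ⟨ζ, hζr, ?_⟩
  by_contra hlt
  have := hlater ζ.1 ξ (not_le.1 hlt)
  rw [show n ζ.1 = m from ζ.2] at this
  exact disjoint_left.1 (hVG _ _).2.2 hζ this

end Cardinality

section Combinatorics

open Filter

theorem leStar_iff_eventually {a b : ℕ → ℕ} : LeStar a b ↔ ∀ᶠ n in atTop, a n ≤ b n := by
  rw [← Nat.cofinite_eq_atTop]
  exact Iff.rfl

theorem exists_incSeq_ge (f : ℕ → ℕ) : ∃ g : IncSeq, ∀ n, f n ≤ g.1 n := by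
  refine ⟨⟨fun n ↦ n + ∑ i ∈ Finset.range (n + 1), f i, strictMono_nat_of_lt_succ fun n ↦ ?_⟩,
    fun n ↦ ?_⟩
  · rw [Finset.sum_range_succ _ (n + 1)]
    omega
  · simp only [Finset.sum_range_succ]
    omega

/-- Fewer than `𝔟` functions are bounded by a single increasing sequence. -/
theorem exists_bound_of_lt_frakB {κ : Type} (f : κ → ℕ → ℕ) (h : #κ < frakB) :
    ∃ s : IncSeq, ∀ i, ∀ᶠ n in atTop, f i n ≤ s.1 n := by
  choose g hg using fun i ↦ exists_incSeq_ge (f i)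
  have hB : Bounded (Set.range g) := by
    by_contra hB
    exact notMem_of_lt_csInf' (Cardinal.mk_range_le.trans_lt h) ⟨_, hB, rfl⟩
  obtain ⟨b, hb⟩ := hB
  refine ⟨b, fun i ↦ ?_⟩
  filter_upwards [leStar_iff_eventually.1 (hb _ ⟨i, rfl⟩)] with n hn
  exact (hg i n).trans hn

theorem exists_dominating_family :
    ∃ d : frakD.ord.ToType → IncSeq, Dominating (Set.range d) := by
  have hne : {c | ∃ D : Set IncSeq, Dominating D ∧ c = #D}.Nonempty :=
    ⟨_, Set.univ, fun a ↦ ⟨a, trivial, by simp [LeStar]⟩, rfl⟩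
  obtain ⟨D, hD, hcard⟩ := csInf_mem hne
  have : #frakD.ord.ToType = #D := by
    rw [← hcard]
    simp [frakD]
  obtain ⟨e⟩ := Cardinal.eq.1 this
  refine ⟨fun i ↦ (e i).1, fun a ↦ ?_⟩
  obtain ⟨x, hx, hax⟩ := hD a
  exact ⟨x, ⟨e.symm ⟨x, hx⟩, by simp⟩, hax⟩

/-- A family of sets containing, along a well-chosen scale, longer and longer intervals generates
a proper filter together with the cofinite sets. -/
theorem exists_free_ultrafilter_of_intervals {ι : Type*} [LinearOrder ι] (C : ι → Set ℕ)
    (s N : ι → ℕ → ℕ) (hs : ∀ i k, k ≤ s i k)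
    (hC : ∀ i k, ∃ k' ≥ k, Set.Icc k' (s i k') ⊆ C i ∧ s i k' ≤ N i k)
    (hN : ∀ i, ∀ j < i, ∀ᶠ k in atTop, N j k ≤ s i k) :
    ∃ U : Ultrafilter ℕ, Free U ∧ ∀ i, C i ∈ U := by
  classical
  have key : ∀ (F : Finset ι) (M : ℕ → ℕ), (∀ k, k ≤ M k) →
      (∀ j ∈ F, ∀ᶠ k in atTop, N j k ≤ M k) →
      ∀ᶠ k in atTop, ∃ n ∈ Set.Icc k (M k), ∀ j ∈ F, n ∈ C j := by
    intro F
    induction F using Finset.induction_on_max with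
    | empty => exact fun M hM _ ↦ Eventually.of_forall fun k ↦ ⟨k, ⟨le_rfl, hM k⟩, by simp⟩
    | insert i F hF ih =>
      intro M _ hNM
      obtain ⟨K, hK⟩ := eventually_atTop.1 (ih (s i) (hs i) fun j hj ↦ hN i j (hF j hj))
      filter_upwards [eventually_ge_atTop K, hNM i (Finset.mem_insert_self _ _)] with k hk hik
      obtain ⟨k', hkk', hsub, hle⟩ := hC i k
      obtain ⟨n, hn, hnF⟩ := hK k' (hk.trans hkk')
      refine ⟨n, ⟨hkk'.trans hn.1, hn.2.trans (hle.trans hik)⟩, fun j hj ↦ ?_⟩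
      rcases Finset.mem_insert.1 hj with rfl | hj
      · exact hsub hn
      · exact hnF j hj
  have hinf : ∀ (F : Finset ι) (m : ℕ), ∃ n ≥ m, ∀ j ∈ F, n ∈ C j := fun F m ↦ by
    have := key F (fun k ↦ k + ∑ j ∈ F, N j k) (fun k ↦ Nat.le_add_right _ _) fun j hj ↦
      Eventually.of_forall fun k ↦
        (Finset.single_le_sum (f := fun j ↦ N j k) (fun _ _ ↦ Nat.zero_le _) hj).trans
          (Nat.le_add_left _ _)
    obtain ⟨k, hk, n, hn, hnF⟩ := ((eventually_ge_atTop m).and this).exists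
    exact ⟨n, hk.trans hn.1, hnF⟩
  have hne : NeBot ((⨅ i, 𝓟 (C i)) ⊓ atTop) := by
    rw [((hasBasis_iInf_principal_finite C).inf atTop_basis).neBot_iff]
    rintro ⟨t, m⟩ ⟨ht, -⟩
    obtain ⟨n, hn, hnt⟩ := hinf ht.toFinset m
    exact ⟨n, Set.mem_iInter₂.2 fun j hj ↦ hnt j (ht.mem_toFinset.2 hj), hn⟩
  obtain ⟨U, hU⟩ := Ultrafilter.exists_le ((⨅ i, 𝓟 (C i)) ⊓ atTop)
  refine ⟨U, ?_, fun i ↦ ?_⟩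
  · rw [Free, Nat.cofinite_eq_atTop]
    exact hU.trans inf_le_right
  · exact hU (mem_inf_of_left (mem_iInf_of_mem i (mem_principal_self _)))

/-- If `𝔟 = 𝔡`, then a family bounded modulo every free ultrafilter is bounded. -/
theorem bounded_of_forall_uBounded (hbd : frakB = frakD) (Z : Set IncSeq)
    (hZ : ∀ U, Free U → UBounded U Z) : Bounded Z := by
  by_contra hunb
  obtain ⟨d, hd⟩ := exists_dominating_family
  have hz : ∀ g : IncSeq, ∃ z ∈ Z, ∀ k, ∃ k' ≥ k, g.1 k' < z.1 k' := fun g ↦ by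
    by_contra! h
    refine hunb ⟨g, fun a ha ↦ leStar_iff_eventually.2 ?_⟩
    obtain ⟨k, hk⟩ := h a ha
    exact eventually_atTop.2 ⟨k, hk⟩
  choose z hzZ next hnext hlt using hz
  let comp (d s : IncSeq) : IncSeq := ⟨d.1 ∘ s.1, d.2.comp s.2⟩
  have hbound : ∀ (i : frakD.ord.ToType) (N : ∀ j, j < i → ℕ → ℕ), ∃ s : IncSeq, ∀ j (hj : j < i),
      ∀ᶠ n in atTop, N j hj n ≤ s.1 n := fun i N ↦ by
    obtain ⟨s, hs⟩ := exists_bound_of_lt_frakB (fun j : Set.Iio i ↦ N j.1 j.2)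
      (by rw [hbd]; simpa using Cardinal.mk_Iio_lt i)
    exact ⟨s, fun j hj ↦ hs ⟨j, hj⟩⟩
  choose bound hbound using hbound
  let step (i : frakD.ord.ToType) (N : ∀ j, j < i → ℕ → ℕ) (k : ℕ) : ℕ :=
    (bound i N).1 (next (comp (d i) (bound i N)) k)
  let N : frakD.ord.ToType → ℕ → ℕ := wellFounded_lt.fix step
  let s (i : frakD.ord.ToType) : IncSeq := bound i fun j _ ↦ N j
  have hN : ∀ i k, N i k = (s i).1 (next (comp (d i) (s i)) k) :=
    fun i k ↦ congrFun (wellFounded_lt.fix_eq step i) k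
  let y (i : frakD.ord.ToType) : IncSeq := z (comp (d i) (s i))
  obtain ⟨U, hU, hUC⟩ := exists_free_ultrafilter_of_intervals
    (fun i ↦ {n | (d i).1 n < (y i).1 n}) (fun i ↦ (s i).1) N (fun i k ↦ (s i).2.le_apply)
    (fun i k ↦ ⟨next (comp (d i) (s i)) k, hnext _ _, fun n hn ↦
      ((d i).2.monotone hn.2).trans_lt
        ((hlt (comp (d i) (s i)) k).trans_le ((y i).2.monotone hn.1)), (hN i k).ge⟩)
    (fun i j hj ↦ hbound i (fun j _ ↦ N j) j hj)
  obtain ⟨b, hb⟩ := hZ U hU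
  obtain ⟨_, ⟨i, rfl⟩, hi⟩ := hd b
  have h1 : ∀ᶠ n in (U : Filter ℕ), b.1 n ≤ (d i).1 n := hU hi
  have h2 : ∀ᶠ n in (U : Filter ℕ), (y i).1 n ≤ b.1 n := hb _ (hzZ _)
  have h3 : ∀ᶠ n in (U : Filter ℕ), (d i).1 n < (y i).1 n := hUC i
  obtain ⟨n, hn1, hn2, hn3⟩ := (h1.and (h2.and h3)).exists
  omega

end Combinatorics

section Covering

open Set

theorem Hurewicz.uMenger {Z : Type*} [TopologicalSpace Z] (h : Hurewicz Z) {U : Ultrafilter ℕ}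
    (hU : Free U) : UMenger U Z := fun 𝒰 h𝒰 ↦ by
  obtain ⟨F, hF, hz⟩ := h 𝒰 h𝒰
  refine ⟨F, hF, fun z ↦ hU ?_⟩
  rw [Filter.mem_cofinite]
  exact hz z

theorem UMenger.of_surjective {U : Ultrafilter ℕ} {Y Z : Type*} [TopologicalSpace Y]
    [TopologicalSpace Z] (h : UMenger U Y) {f : Y → Z} (hf : Continuous f)
    (hsurj : Function.Surjective f) : UMenger U Z := fun 𝒰 h𝒰 ↦ by
  obtain ⟨F, hF, hy⟩ := h (fun n ↦ preimage f '' 𝒰 n) fun n ↦ ⟨by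
    rintro _ ⟨u, hu, rfl⟩
    exact ((h𝒰 n).1 u hu).preimage hf, by
    rw [sUnion_image, ← preimage_iUnion₂, ← sUnion_eq_biUnion, (h𝒰 n).2, preimage_univ]⟩
  refine ⟨fun n ↦ 𝒰 n ∩ preimage f ⁻¹' F n, fun n ↦ ⟨inter_subset_left,
    ((hF n).2.preimage hsurj.preimage_injective.injOn).subset inter_subset_right⟩, fun z ↦ ?_⟩
  obtain ⟨y, rfl⟩ := hsurj z
  refine Filter.mem_of_superset (hy y) fun n ↦ ?_
  rintro ⟨v, hv, hyv⟩
  obtain ⟨u, hu, rfl⟩ := (hF n).1 hv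
  exact ⟨u, ⟨hu, hv⟩, hyv⟩

theorem UMenger.exists_countable_subcover {U : Ultrafilter ℕ} {Y : Type*} [TopologicalSpace Y]
    [Nonempty Y] (h : UMenger U Y) {𝒱 : Set (Set Y)} (hopen : ∀ u ∈ 𝒱, IsOpen u)
    (hcov : ⋃₀ 𝒱 = Set.univ) : ∃ e : ℕ → Set Y, (∀ k, e k ∈ 𝒱) ∧ ∀ y, ∃ k, y ∈ e k := by
  obtain ⟨F, hF, hy⟩ := h (fun _ ↦ 𝒱) fun _ ↦ ⟨hopen, hcov⟩
  have hmem : ∀ y, ∃ u ∈ ⋃ n, F n, y ∈ u := fun y ↦ by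
    obtain ⟨n, u, hu, hyu⟩ := Ultrafilter.nonempty_of_mem (hy y)
    exact ⟨u, mem_iUnion.2 ⟨n, hu⟩, hyu⟩
  obtain ⟨u₀, hu₀, -⟩ := hmem (Classical.arbitrary Y)
  obtain ⟨e, he⟩ := (countable_iUnion fun n ↦ (hF n).2.countable).exists_eq_range ⟨u₀, hu₀⟩
  refine ⟨e, fun k ↦ ?_, fun y ↦ ?_⟩
  · obtain ⟨n, hn⟩ := mem_iUnion.1 (he ▸ mem_range_self k : e k ∈ ⋃ n, F n)
    exact (hF n).1 hn
  · obtain ⟨u, hu, hyu⟩ := hmem y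
    rw [he] at hu
    obtain ⟨k, rfl⟩ := hu
    exact ⟨k, hyu⟩

/-- If `𝔟 = 𝔡`, then a space that is `U`-Menger for all free ultrafilters `U` is Hurewicz. -/
theorem hurewicz_of_forall_uMenger (hbd : frakB = frakD) {Y : Type*} [TopologicalSpace Y]
    [Nonempty Y] (h : ∀ U, Free U → UMenger U Y) : Hurewicz Y := fun 𝒰 h𝒰 ↦ by
  classical
  have hfree : Free (Filter.hyperfilter ℕ) := Filter.hyperfilter_le_cofinite
  choose e he hecov using fun n ↦
    (h _ hfree).exists_countable_subcover (h𝒰 n).1 (h𝒰 n).2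
  let O (n k : ℕ) : Set Y := ⋂ i ∈ Iic n, ⋃ j ∈ Iic k, e i j
  have hO : ∀ n k, IsOpen (O n k) := fun n k ↦
    (finite_Iic n).isOpen_biInter fun i _ ↦ isOpen_biUnion fun j _ ↦ (h𝒰 i).1 _ (he i j)
  have hmono : ∀ n, Monotone (O n) := fun n k l hkl ↦
    iInter₂_mono fun i _ ↦ biUnion_subset_biUnion_left (Iic_subset_Iic.2 hkl)
  have hanti : ∀ k, Antitone fun n ↦ O n k := fun k n m hnm ↦
    biInter_subset_biInter_left (Iic_subset_Iic.2 hnm)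
  have hex : ∀ y n, ∃ k, y ∈ O n k := fun y n ↦ by
    choose k hk using fun i ↦ hecov i y
    exact ⟨(Finset.range (n + 1)).sup k, mem_iInter₂.2 fun i hi ↦ mem_iUnion₂.2
      ⟨k i, Finset.le_sup (f := k) (Finset.mem_range.2 (Nat.lt_succ_of_le hi)), hk i⟩⟩
  let g (y : Y) : IncSeq := ⟨fun n ↦ n + Nat.find (hex y n), strictMono_nat_of_lt_succ fun n ↦ by
    have : Nat.find (hex y n) ≤ Nat.find (hex y (n + 1)) :=
      Nat.find_min' _ (hanti _ n.le_succ (Nat.find_spec (hex y (n + 1))))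
    omega⟩
  have hg : ∀ y n k, (g y).1 n ≤ k → y ∈ O n k := fun y n k hk ↦
    hmono n ((Nat.le_add_left _ _).trans hk) (Nat.find_spec (hex y n))
  obtain ⟨b, hb⟩ := bounded_of_forall_uBounded hbd (range g) fun U hU ↦ by
    obtain ⟨F, hF, hy⟩ := h U hU (fun n ↦ range (O n)) fun n ↦ ⟨by
      rintro _ ⟨k, rfl⟩
      exact hO n k, by
      rw [sUnion_range, iUnion_eq_univ_iff]
      exact fun y ↦ hex y n⟩
    have hbd' : ∀ n, ∃ k, ⋃₀ F n ⊆ O n k := fun n ↦ by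
      choose! κ hκ using (hF n).1
      obtain ⟨k, hk⟩ := ((hF n).2.image κ).bddAbove
      refine ⟨k, sUnion_subset fun v hv ↦ ?_⟩
      rw [← hκ hv]
      exact hmono n (hk (mem_image_of_mem κ hv))
    choose k hk using hbd'
    obtain ⟨b, hb⟩ := exists_incSeq_ge fun n ↦ n + k n
    refine ⟨b, ?_⟩
    rintro _ ⟨y, rfl⟩
    refine Filter.mem_of_superset (hy y) fun n hn ↦ ?_
    exact (Nat.add_le_add_left (Nat.find_min' (hex y n) (hk n hn)) n).trans (hb n)
  refine ⟨fun n ↦ e n '' Iic (b.1 n), fun n ↦ ⟨?_, (finite_Iic _).image _⟩, fun y ↦ ?_⟩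
  · rintro _ ⟨k, -, rfl⟩
    exact he n k
  · refine (hb _ ⟨y, rfl⟩).subset fun n hn hle ↦ hn ?_
    rw [sUnion_image]
    exact mem_iInter₂.1 (hg y n _ hle) n self_mem_Iic

end Covering

/-- assume `𝔟 = 𝔡`. In the class of hereditarily Lindelöf spaces, each
space which is productively `U`-Menger for all ultrafilters `U` is productively
Hurewicz. -/
theorem stmt10 (hbd : frakB = frakD)
    (X : Type u) [TopologicalSpace X] [T35Space X] [Infinite X]
    (hX : ∀ U : Ultrafilter ℕ, Free U →
      ∀ (T : Type v) [TopologicalSpace T] [T35Space T] [Infinite T]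
        [HereditarilyLindelofSpace T], UMenger U T → UMenger U (X × T))
    (H : Type w) [TopologicalSpace H] [T35Space H] [Infinite H]
    [HereditarilyLindelofSpace H] (hH : Hurewicz H) :
    Hurewicz (X × H) := by
  have : Small.{v} H := small_of_hereditarilyLindelof
  let φ := Shrink.homeomorph.{v} H
  have : T35Space (Shrink.{v} H) := φ.symm.isEmbedding.t35Space
  have : Infinite (Shrink.{v} H) := φ.toEquiv.infinite_iff.1 inferInstance
  have : HereditarilyLindelofSpace (Shrink.{v} H) := .of_forall_isOpen fun s _ ↦ by
    rw [← φ.image_preimage s]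
    exact (HereditarilyLindelofSpace.isLindelof _).image φ.continuous
  refine hurewicz_of_forall_uMenger hbd fun U hU ↦ ?_
  have hT := hX U hU _ ((hH.uMenger hU).of_surjective φ.continuous φ.surjective)
  exact hT.of_surjective (f := Prod.map id φ.symm) (continuous_id.prodMap φ.symm.continuous)
    (Function.surjective_id.prodMap φ.symm.surjective)
end

section
/- Assume 𝔟 = 𝔡. Then every unbounded set X ⊆ [ω]^ω contains a 𝔡-unbounded subset. -/
open Cardinal

theorem LeStar.trans {a b c : ℕ → ℕ} (hab : LeStar a b) (hbc : LeStar b c) : LeStar a c := by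
  refine (Set.Finite.union hab hbc).subset fun n hn => ?_
  simp only [Set.mem_union, Set.mem_ofPred_eq] at hn ⊢
  omega

theorem bounded_of_mk_lt_frakB {A : Set IncSeq} (hA : #A < frakB) : Bounded A := by
  by_contra h
  exact hA.not_ge (csInf_le' ⟨A, h, rfl⟩)

/-- A finite subset of `[ω]^ω` is not dominating: the sum of its elements, shifted up, escapes it. -/
theorem Set.Finite.not_dominating {D : Set IncSeq} (hD : D.Finite) : ¬ Dominating D := by
  intro h
  have hmono : StrictMono fun n => n + 1 + ∑ d ∈ hD.toFinset, d.1 n := by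
    intro m n hmn
    have : ∑ d ∈ hD.toFinset, d.1 m ≤ ∑ d ∈ hD.toFinset, d.1 n :=
      Finset.sum_le_sum fun d _ => d.2.monotone hmn.le
    dsimp only
    omega
  obtain ⟨d, hd, hle⟩ := h ⟨_, hmono⟩
  refine Set.infinite_univ (hle.subset fun n _ => ?_)
  have : d.1 n ≤ ∑ d ∈ hD.toFinset, d.1 n :=
    Finset.single_le_sum (f := fun d : IncSeq => d.1 n) (fun _ _ => Nat.zero_le _)
      (hD.mem_toFinset.2 hd)
  simp only [Set.mem_ofPred_eq]
  omega

theorem exists_dominating_mk_eq_frakD : ∃ D : Set IncSeq, Dominating D ∧ frakD = #D :=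
  csInf_mem (s := {c | ∃ D : Set IncSeq, Dominating D ∧ c = #D})
    ⟨_, Set.univ, fun a => ⟨a, trivial, by simp [LeStar]⟩, rfl⟩

theorem aleph0_le_frakD : ℵ₀ ≤ frakD := by
  obtain ⟨D, hD, hcard⟩ := exists_dominating_mk_eq_frakD
  by_contra! h
  rw [hcard, Cardinal.lt_aleph0_iff_set_finite] at h
  exact h.not_dominating hD

/-- assume `𝔟 = 𝔡`. Then every unbounded set `X ⊆ [ω]^ω` contains a
`𝔡`-unbounded subset. -/
theorem stmt12 (hbd : frakB = frakD)
    (X : Set IncSeq) (hX : ¬ Bounded X) :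
    ∃ A ⊆ X, DUnbounded A := by
  obtain ⟨D, hD, hcard⟩ := exists_dominating_mk_eq_frakD
  have hinf : ℵ₀ ≤ #D := hcard ▸ aleph0_le_frakD
  have hmk : #(#D).ord.ToType = #D := Cardinal.mk_ord_toType _
  obtain ⟨d⟩ := Cardinal.eq.1 hmk
  have hIio (α : (#D).ord.ToType) : #(Set.Iio α) < #D :=
    (Cardinal.mk_Iio_lt α (by rw [hmk, Ordinal.type_toType])).trans_eq hmk
  have hIic (α : (#D).ord.ToType) : #(Set.Iic α) < #D := by
    rw [← Set.Iio_insert]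
    exact Cardinal.mk_insert_le.trans_lt
      (Cardinal.add_lt_of_lt hinf (hIio α) (Cardinal.one_lt_aleph0.trans_le hinf))
  have hb (α : (#D).ord.ToType) : Bounded ((fun β => (d β).1) '' Set.Iic α) :=
    bounded_of_mk_lt_frakB <| Cardinal.mk_image_le.trans_lt <| by
      rw [hbd, hcard]; exact hIic α
  choose b hb using hb
  have ha (α : (#D).ord.ToType) : ∃ a ∈ X, ¬ LeStar a.1 (b α).1 := by
    by_contra! h
    exact hX ⟨b α, h⟩
  choose a haX hab using ha
  have key {β α : (#D).ord.ToType} (h : β ≤ α) : ¬ LeStar (a α).1 (d β).1.1 := fun hle =>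
    hab α (hle.trans (hb α _ ⟨β, h, rfl⟩))
  have hdom (c : IncSeq) : ∃ β, LeStar c.1 (d β).1.1 := by
    obtain ⟨e, he, hce⟩ := hD c
    exact ⟨d.symm ⟨e, he⟩, by simpa using hce⟩
  refine ⟨Set.range a, Set.range_subset_iff.2 haX, ?_, ?_⟩
  · rw [← hbd]
    by_contra! h
    obtain ⟨c, hc⟩ := bounded_of_mk_lt_frakB h
    obtain ⟨β, hβ⟩ := hdom c
    exact key le_rfl ((hc _ ⟨β, rfl⟩).trans hβ)
  · rintro B hBA ⟨c, hc⟩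
    obtain ⟨β, hβ⟩ := hdom c
    have hsub : B ⊆ a '' Set.Iio β := by
      intro x hx
      obtain ⟨α, rfl⟩ := hBA hx
      exact ⟨α, lt_of_not_ge fun h => key h ((hc _ hx).trans hβ), rfl⟩
    rw [hcard]
    exact (Cardinal.mk_le_mk_of_subset hsub).trans_lt (Cardinal.mk_image_le.trans_lt (hIio β))
end
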